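/- (Non-unitary Decoupling lemma.) Let m, n ≥ 1, let G be a group, and let ρ_A : G → SL(m,ℂ) and ρ_B : G → SL(n,ℂ) be group homomorphisms whose images are dense in SL(m,ℂ) and SL(n,ℂ) respectively. Assume the following cross-Cauchy condition: for every sequence (g_k) in G, if (ρ_A(g_k)) is a Cauchy sequence then some subsequence (g_{k_j}) makes (ρ_B(g_{k_j})) Cauchy, and symmetrically with A and B exchanged. Then: (i) if m ≠ n, full decoupling holds: for every V_A ∈ SL(m,ℂ) and V_B ∈ SL(n,ℂ) there exists a sequence (g_k) in G with ρ_A(g_k) → V_A and ρ_B(g_k) → V_B; (ii) if m = n, then either full decoupling holds, or for every sequence (g_k) with ρ_A(g_k) → I there is a subsequence along which ρ_B(g_{k_j}) converges to an element of the center of SL(n,ℂ), and symmetrically with A and B exchanged. -/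

import Mathlib

open Filter

lemma aux_card_le {ι : Type*} (m p : ℕ) (hp : 0 < p)
    (F : ι → Matrix (Fin m) (Fin m) ℂ) (hinj : Function.Injective F)
    (hcomm : ∀ i j, Commute (F i) (F j)) (hpow : ∀ i, F i ^ p = 1) :
    Nat.card ι ≤ p ^ m := by
  classical
  have : NeZero p := ⟨hp.ne'⟩
  let f : ι → Module.End ℂ (Fin m → ℂ) := fun i => Matrix.toLinAlgEquiv' (F i)
  have fpow : ∀ i, f i ^ p = 1 := fun i => by
    simp only [f]; rw [← map_pow, hpow, map_one]
  have hss : ∀ i, (f i).IsSemisimple := fun i => by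
    have hs : (Polynomial.X ^ p - Polynomial.C (1:ℂ)).Separable :=
      Polynomial.separable_X_pow_sub_C 1 (by exact_mod_cast hp.ne') one_ne_zero
    refine Module.End.isSemisimple_of_squarefree_aeval_eq_zero hs.squarefree ?_
    simp [fpow]
  have htop := Module.End.iSup_iInf_maxGenEigenspace_eq_top_of_iSup_maxGenEigenspace_eq_top_of_commute
    f (fun i j _ => (hcomm i j).map _) (fun i => Module.End.iSup_maxGenEigenspace_eq_top _)
  let S : Set (Fin m → ℂ) := {v | ∀ i, ∃ c : ℂ, f i v = c • v}
  have hS : Submodule.span ℂ S = ⊤ := by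
    rw [eq_top_iff, ← htop]
    refine iSup_le fun χ v hv => Submodule.subset_span fun i => ⟨χ i, ?_⟩
    have := (Submodule.mem_iInf _).1 hv i
    rw [(hss i).isFinitelySemisimple.maxGenEigenspace_eq_eigenspace] at this
    exact Module.End.mem_eigenspace_iff.1 this
  obtain ⟨b, hbS, hbspan, hbli⟩ := Submodule.exists_fun_fin_finrank_span_eq ℂ S
  have hr : Module.finrank ℂ (Submodule.span ℂ S) = m := by
    rw [hS]; simp
  choose c hc using hbS
  have hcp : ∀ i k, c k i ^ p = 1 := by
    intro i k
    have h1 : ∀ q : ℕ, (f i ^ q) (b k) = (c k i) ^ q • b k := by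
      intro q
      induction q with
      | zero => simp
      | succ q ih => rw [pow_succ', Module.End.mul_apply, ih, map_smul, hc, smul_smul, pow_succ]
    have h2 := h1 p
    rw [fpow, Module.End.one_apply] at h2
    have h3 : (1 - c k i ^ p) • b k = 0 := by rw [sub_smul, ← h2, one_smul, sub_self]
    rcases smul_eq_zero.1 h3 with h | h
    · exact (sub_eq_zero.1 h).symm
    · exact absurd h (hbli.ne_zero k)
  let Ψ : ι → (Fin (Module.finrank ℂ (Submodule.span ℂ S)) → rootsOfUnity p ℂ) :=
    fun i k => rootsOfUnity.mkOfPowEq (c k i) (hcp i k)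
  have hΨ : Function.Injective Ψ := by
    intro i j hij
    apply hinj
    apply Matrix.toLinAlgEquiv'.injective
    refine LinearMap.ext_on_range (v := b) (by rw [hbspan, hS]) fun k => ?_
    have : c k i = c k j := by
      have := congrArg (fun z : rootsOfUnity p ℂ => ((z : ℂˣ) : ℂ)) (congrFun hij k)
      simpa [Ψ] using this
    change f i (b k) = f j (b k)
    rw [hc, hc, this]
  have := Nat.card_le_card_of_injective Ψ hΨ
  rw [Nat.card_fun, Nat.card_fin, Complex.card_rootsOfUnity, hr] at this
  exact this

lemma aux_center_pow {m : ℕ} {z : Matrix.SpecialLinearGroup (Fin m) ℂ}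
    (hz : z ∈ Subgroup.center _) : z ^ m = 1 := by
  obtain ⟨r, hr, h⟩ := Matrix.SpecialLinearGroup.mem_center_iff.1 hz
  apply Subtype.ext
  rw [Fintype.card_fin] at hr
  change ((z ^ m : Matrix.SpecialLinearGroup (Fin m) ℂ) : Matrix (Fin m) (Fin m) ℂ) = 1
  rw [Matrix.SpecialLinearGroup.coe_pow, ← h, ← map_pow, hr, map_one]

lemma aux_pow_coprime {A : Type*} [Group A] {z : A} {m p : ℕ} (h : Nat.Coprime m p)
    (h1 : z ^ m = 1) (h2 : z ^ p = 1) : z = 1 := by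
  have := Nat.dvd_gcd (orderOf_dvd_of_pow_eq_one h1) (orderOf_dvd_of_pow_eq_one h2)
  rw [h] at this
  simpa using this

/-- A group extension argument, by counting elementary abelian subgroups. -/
lemma aux_alg {m k : ℕ} (hm : 1 ≤ m) 
    (H : Subgroup (Matrix.SpecialLinearGroup (Fin m) ℂ × Matrix.SpecialLinearGroup (Fin (k+1)) ℂ))
    (hs : ∀ b, ∃ a, (a, b) ∈ H)
    (hA : ∀ a, (a, 1) ∈ H → a ∈ Subgroup.center _)
    (hB : ∀ b, (1, b) ∈ H → b ∈ Subgroup.center _) : k + 1 ≤ m := by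
  obtain ⟨p, hpge, hp⟩ := Nat.exists_infinite_primes (m + k + 2)
  have : NeZero p := ⟨hp.ne_zero⟩
  have cm : Nat.Coprime m p :=
    ((Nat.Prime.coprime_iff_not_dvd hp).2 fun h => by have := Nat.le_of_dvd (by omega) h; omega).symm
  have ck : Nat.Coprime (k+1) p :=
    ((Nat.Prime.coprime_iff_not_dvd hp).2 fun h => by have := Nat.le_of_dvd (by omega) h; omega).symm
  -- the torus
  let μ := rootsOfUnity p ℂ
  let E : (Fin k → μ) → (Fin (k+1) → μ) := fun f => Fin.cons (∏ i, f i)⁻¹ f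
  have hE1 : ∀ f, ∏ i, E f i = 1 := fun f => by simp [E, Fin.prod_univ_succ]
  let D : (Fin k → μ) → Matrix.SpecialLinearGroup (Fin (k+1)) ℂ := fun f =>
    ⟨Matrix.diagonal (fun i => (((E f i : μ) : ℂˣ) : ℂ)), by
      rw [Matrix.det_diagonal]
      have := congrArg (fun z : μ => ((z : ℂˣ) : ℂ)) (hE1 f)
      simpa using this⟩
  have hD : ∀ f, (D f : Matrix (Fin (k+1)) (Fin (k+1)) ℂ) =
    Matrix.diagonal (fun i => (((E f i : μ) : ℂˣ) : ℂ)) := fun f => rfl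
  have hDinj : Function.Injective D := by
    intro f g h
    have h' : Matrix.diagonal (fun i => (((E f i : μ) : ℂˣ) : ℂ)) =
      Matrix.diagonal (fun i => (((E g i : μ) : ℂˣ) : ℂ)) := congrArg Subtype.val h
    have h2 := Matrix.diagonal_injective h'
    funext i
    have h3 := congrFun h2 i.succ
    apply Subtype.ext
    apply Units.ext
    simpa [E] using h3
  have hDcomm : ∀ f g, D f * D g = D g * D f := by
    intro f g
    apply Subtype.ext
    change ((D f * D g : Matrix.SpecialLinearGroup (Fin (k+1)) ℂ) :
        Matrix (Fin (k+1)) (Fin (k+1)) ℂ) =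
      ((D g * D f : Matrix.SpecialLinearGroup (Fin (k+1)) ℂ) :
        Matrix (Fin (k+1)) (Fin (k+1)) ℂ)
    rw [Matrix.SpecialLinearGroup.coe_mul, Matrix.SpecialLinearGroup.coe_mul, hD, hD,
      Matrix.diagonal_mul_diagonal, Matrix.diagonal_mul_diagonal]
    simp only [mul_comm]
  have hDpow : ∀ f, D f ^ p = 1 := by
    intro f
    apply Subtype.ext
    change ((D f ^ p : Matrix.SpecialLinearGroup (Fin (k+1)) ℂ) :
        Matrix (Fin (k+1)) (Fin (k+1)) ℂ) = 1
    rw [Matrix.SpecialLinearGroup.coe_pow, hD, Matrix.diagonal_pow, ← Matrix.diagonal_one]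
    congr 1
    funext i
    exact (mem_rootsOfUnity' p _).1 (E f i).2
  choose a0 ha0 using fun f => hs (D f)
  let a := fun f => a0 f ^ m
  have ha : ∀ f, (a f, D f ^ m) ∈ H := fun f => H.pow_mem (ha0 f) m
  have hap : ∀ f, a f ^ p = 1 := by
    intro f
    have h1 : (a0 f ^ p, (1:Matrix.SpecialLinearGroup (Fin (k+1)) ℂ)) ∈ H := by
      have := H.pow_mem (ha0 f) p
      rwa [Prod.pow_mk, hDpow] at this
    have := aux_center_pow (hA _ h1)
    rw [← pow_mul, mul_comm, pow_mul] at this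
    exact this
  have hacomm : ∀ f g, a f * a g = a g * a f := by
    intro f g
    have h1 : (a f * a g * (a f)⁻¹ * (a g)⁻¹, (1:Matrix.SpecialLinearGroup (Fin (k+1)) ℂ)) ∈ H := by
      have := H.mul_mem (H.mul_mem (H.mul_mem (ha f) (ha g)) (H.inv_mem (ha f))) (H.inv_mem (ha g))
      have hc : D f ^ m * D g ^ m = D g ^ m * D f ^ m :=
        ((show Commute (D f) (D g) from hDcomm f g).pow_pow m m).eq
      simpa [hc] using this
    have hz := hA _ h1
    set z := a f * a g * (a f)⁻¹ * (a g)⁻¹ with hzd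
    have hzc : ∀ y, Commute z y := fun y => ((Subgroup.mem_center_iff.1 hz) y).symm
    have h2 : a f * a g * (a f)⁻¹ = z * a g := by rw [hzd]; group
    have h3 : (a f * a g * (a f)⁻¹) ^ p = 1 := by rw [conj_pow, hap]; simp
    rw [h2, (hzc _).mul_pow, hap, mul_one] at h3
    have h4 := aux_pow_coprime cm (aux_center_pow hz) h3
    rw [h4, one_mul] at h2
    exact mul_inv_eq_iff_eq_mul.1 h2
  have hainj : Function.Injective a := by
    intro f g h
    have h1 : ((1:Matrix.SpecialLinearGroup (Fin m) ℂ), D f ^ m * (D g ^ m)⁻¹) ∈ H := by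
      have := H.mul_mem (ha f) (H.inv_mem (ha g))
      simpa [h] using this
    have hz := aux_center_pow (hB _ h1)
    have hc : Commute (D f) (D g)⁻¹ := Commute.inv_right (hDcomm f g)
    have hpw : (D f * (D g)⁻¹) ^ p = 1 := by
      rw [hc.mul_pow, inv_pow, hDpow, hDpow]; simp
    rw [← inv_pow, ← hc.mul_pow] at hz
    have h2 := aux_pow_coprime ck hz (by rw [← pow_mul, mul_comm, pow_mul, hpw, one_pow])
    have h3 := aux_pow_coprime cm h2 hpw
    exact hDinj (mul_inv_eq_one.1 h3)
  let F : (Fin k → μ) × μ → Matrix (Fin m) (Fin m) ℂ := fun x =>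
    (((x.2 : μ) : ℂˣ) : ℂ) • (a x.1 : Matrix (Fin m) (Fin m) ℂ)
  have key := aux_card_le m p hp.pos F ?_ ?_ ?_
  · have hc : Nat.card μ = p := Complex.card_rootsOfUnity p
    rw [Nat.card_prod, Nat.card_fun, Nat.card_fin, hc, ← pow_succ] at key
    exact (Nat.pow_le_pow_iff_right hp.one_lt).1 key
  · rintro ⟨f, w⟩ ⟨g, v⟩ h
    have hd := congrArg Matrix.det h
    simp only [F, Matrix.det_smul, Matrix.SpecialLinearGroup.det_coe, Fintype.card_fin, mul_one] at hd
    have hw : w ^ m = v ^ m := by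
      apply Subtype.ext; apply Units.ext; simpa using hd
    have hwp : ∀ w : μ, w ^ p = 1 := fun w => Subtype.ext w.2
    have hwv : w * v⁻¹ = 1 := aux_pow_coprime cm
      (by rw [mul_pow, hw, inv_pow, mul_inv_cancel]) (hwp _)
    obtain rfl := mul_inv_eq_one.1 hwv
    have : (a f : Matrix (Fin m) (Fin m) ℂ) = a g :=
      smul_right_injective _ (Units.ne_zero (w : ℂˣ)) h
    rw [hainj (Subtype.ext this)]
  · rintro ⟨f, w⟩ ⟨g, v⟩
    have : Commute (a f : Matrix (Fin m) (Fin m) ℂ) (a g) := by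
      have := congrArg Subtype.val (hacomm f g)
      exact this
    exact (this.smul_left _).smul_right _
  · rintro ⟨f, w⟩
    simp only [F, smul_pow]
    rw [← Matrix.SpecialLinearGroup.coe_pow, hap, (mem_rootsOfUnity' p _).1 w.2]
    simp

section analysis
open Topology
attribute [local instance] Matrix.normedAddCommGroup Matrix.normedSpace

variable {G : Type*} [Group G]

/-- The closure of the joint image, described by sequences. -/
def relSub {m n : ℕ} (ρA : G →* Matrix.SpecialLinearGroup (Fin m) ℂ)
    (ρB : G →* Matrix.SpecialLinearGroup (Fin n) ℂ) :
    Subgroup (Matrix.SpecialLinearGroup (Fin m) ℂ × Matrix.SpecialLinearGroup (Fin n) ℂ) where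
  carrier := {x | ∃ g : ℕ → G, Tendsto (fun k => ρA (g k)) atTop (𝓝 x.1) ∧
    Tendsto (fun k => ρB (g k)) atTop (𝓝 x.2)}
  one_mem' := ⟨fun _ => 1, by simp⟩
  mul_mem' := by
    rintro x y ⟨g, h1, h2⟩ ⟨g', h1', h2'⟩
    exact ⟨fun k => g k * g' k, by simpa using h1.mul h1', by simpa using h2.mul h2'⟩
  inv_mem' := by
    rintro x ⟨g, h1, h2⟩
    exact ⟨fun k => (g k)⁻¹, by simpa using h1.inv, by simpa using h2.inv⟩

lemma relSub_swap {m n : ℕ} {ρA : G →* Matrix.SpecialLinearGroup (Fin m) ℂ}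
    {ρB : G →* Matrix.SpecialLinearGroup (Fin n) ℂ} {a b} :
    (a, b) ∈ relSub ρA ρB ↔ (b, a) ∈ relSub ρB ρA :=
  ⟨fun ⟨g, h⟩ => ⟨g, h.symm⟩, fun ⟨g, h⟩ => ⟨g, h.symm⟩⟩

lemma tendsto_SL {m : ℕ} {f : ℕ → Matrix.SpecialLinearGroup (Fin m) ℂ}
    {a : Matrix.SpecialLinearGroup (Fin m) ℂ} :
    Tendsto f atTop (𝓝 a) ↔
      Tendsto (fun k => (f k : Matrix (Fin m) (Fin m) ℂ)) atTop (𝓝 (a : Matrix (Fin m) (Fin m) ℂ)) :=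
  Matrix.SpecialLinearGroup.isClosedEmbedding_val.isEmbedding.isInducing.tendsto_nhds_iff

/-- Cauchy sequences in `SL` converge in `SL`. -/
lemma cauchy_SL {m : ℕ} {f : ℕ → Matrix.SpecialLinearGroup (Fin m) ℂ}
    (h : CauchySeq (fun k => (f k : Matrix (Fin m) (Fin m) ℂ))) :
    ∃ a, Tendsto f atTop (𝓝 a) := by
  obtain ⟨M, hM⟩ := cauchySeq_tendsto_of_complete h
  have hd : M.det = 1 := by
    have h1 : Tendsto (fun k => (f k : Matrix (Fin m) (Fin m) ℂ).det) atTop (𝓝 M.det) :=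
      ((continuous_id.matrix_det).tendsto M).comp hM
    simp only [Matrix.SpecialLinearGroup.det_coe] at h1
    exact tendsto_nhds_unique h1 tendsto_const_nhds
  exact ⟨⟨M, hd⟩, tendsto_SL.2 hM⟩

variable {m n : ℕ} {ρA : G →* Matrix.SpecialLinearGroup (Fin m) ℂ}
    {ρB : G →* Matrix.SpecialLinearGroup (Fin n) ℂ}

/-- From a convergent sequence on the `A` side one obtains a limit in the relation. -/
lemma rel_subseq (hAB : ∀ g : ℕ → G,
      CauchySeq (fun k => ((ρA (g k) : Matrix (Fin m) (Fin m) ℂ))) →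
      ∃ φ : ℕ → ℕ, StrictMono φ ∧
        CauchySeq (fun j => ((ρB (g (φ j)) : Matrix (Fin n) (Fin n) ℂ))))
    {g : ℕ → G} {a} (h : Tendsto (fun k => ρA (g k)) atTop (𝓝 a)) :
    ∃ φ : ℕ → ℕ, StrictMono φ ∧ ∃ b, Tendsto (fun j => ρB (g (φ j))) atTop (𝓝 b) ∧
      (a, b) ∈ relSub ρA ρB := by
  obtain ⟨φ, hφ, hc⟩ := hAB g (tendsto_SL.1 h).cauchySeq
  obtain ⟨b, hb⟩ := cauchy_SL hc
  exact ⟨φ, hφ, b, hb, fun j => g (φ j), h.comp hφ.tendsto_atTop, hb⟩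

lemma rel_surj (hdA : {M : Matrix (Fin m) (Fin m) ℂ | M.det = 1} ⊆
      closure (Set.range fun g : G => ((ρA g : Matrix (Fin m) (Fin m) ℂ))))
    (hAB : ∀ g : ℕ → G,
      CauchySeq (fun k => ((ρA (g k) : Matrix (Fin m) (Fin m) ℂ))) →
      ∃ φ : ℕ → ℕ, StrictMono φ ∧
        CauchySeq (fun j => ((ρB (g (φ j)) : Matrix (Fin n) (Fin n) ℂ))))
    (a) : ∃ b, (a, b) ∈ relSub ρA ρB := by
  have : FrechetUrysohnSpace (Matrix (Fin m) (Fin m) ℂ) :=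
    inferInstanceAs (FrechetUrysohnSpace (Fin m → Fin m → ℂ))
  obtain ⟨x, hx, hlim⟩ := mem_closure_iff_seq_limit.1 (hdA (show a.1 ∈ _ from a.2))
  choose g hg using hx
  have : Tendsto (fun k => ρA (g k)) atTop (𝓝 a) := by
    rw [tendsto_SL]
    simpa only [hg] using hlim
  obtain ⟨_, _, b, _, hb⟩ := rel_subseq hAB this
  exact ⟨b, hb⟩

lemma rel_bdd (hAB : ∀ g : ℕ → G,
      CauchySeq (fun k => ((ρA (g k) : Matrix (Fin m) (Fin m) ℂ))) →
      ∃ φ : ℕ → ℕ, StrictMono φ ∧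
        CauchySeq (fun j => ((ρB (g (φ j)) : Matrix (Fin n) (Fin n) ℂ)))) :
    ∃ C : ℝ, ∀ b, (1, b) ∈ relSub ρA ρB → ‖(b : Matrix (Fin n) (Fin n) ℂ)‖ ≤ C := by
  by_contra! hcon
  choose b hb hbn using fun k : ℕ => hcon (k + 1)
  have hex : ∀ k : ℕ, ∃ g : G, ‖(ρA g : Matrix (Fin m) (Fin m) ℂ) - 1‖ < 1 / ((k:ℝ) + 1) ∧
      ‖(ρB g : Matrix (Fin n) (Fin n) ℂ) - b k‖ < 1 := by
    intro k
    obtain ⟨g, h1, h2⟩ := hb k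
    have h1' := (tendsto_iff_norm_sub_tendsto_zero.1 (tendsto_SL.1 h1)).eventually_lt_const
      (show (0:ℝ) < 1 / ((k:ℝ) + 1) by positivity)
    have h2' := (tendsto_iff_norm_sub_tendsto_zero.1 (tendsto_SL.1 h2)).eventually_lt_const
      (show (0:ℝ) < 1 by positivity)
    obtain ⟨j, hj1, hj2⟩ := (h1'.and h2').exists
    exact ⟨g j, by simpa using hj1, hj2⟩
  choose g hg1 hg2 using hex
  have hlim : Tendsto (fun k => (ρA (g k) : Matrix (Fin m) (Fin m) ℂ)) atTop (𝓝 1) := by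
    refine tendsto_iff_norm_sub_tendsto_zero.2 ?_
    exact squeeze_zero (fun _ => norm_nonneg _) (fun k => (hg1 k).le)
      tendsto_one_div_add_atTop_nhds_zero_nat
  obtain ⟨φ, hφ, hc⟩ := hAB g hlim.cauchySeq
  obtain ⟨M, hM⟩ := cauchySeq_tendsto_of_complete hc
  obtain ⟨R, hR⟩ := hM.norm.bddAbove_range
  obtain ⟨j, hj⟩ := exists_nat_gt R
  have h1 : ‖(ρB (g (φ j)) : Matrix (Fin n) (Fin n) ℂ)‖ ≤ R := hR ⟨j, rfl⟩
  have h2 := hbn (φ j)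
  have h3 := hg2 (φ j)
  have h4 : (j : ℝ) ≤ φ j := by exact_mod_cast hφ.id_le j
  have h5 := norm_sub_norm_le (b (φ j) : Matrix (Fin n) (Fin n) ℂ) (ρB (g (φ j)))
  rw [norm_sub_rev] at h5
  linarith

lemma rel_central (hAB : ∀ g : ℕ → G,
      CauchySeq (fun k => ((ρA (g k) : Matrix (Fin m) (Fin m) ℂ))) →
      ∃ φ : ℕ → ℕ, StrictMono φ ∧
        CauchySeq (fun j => ((ρB (g (φ j)) : Matrix (Fin n) (Fin n) ℂ))))
    (hs : ∀ b, ∃ a, (a, b) ∈ relSub ρA ρB) (b) (hb : (1, b) ∈ relSub ρA ρB) :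
    b ∈ Subgroup.center (Matrix.SpecialLinearGroup (Fin n) ℂ) := by
  obtain ⟨C, hC⟩ := rel_bdd hAB
  have hconj : ∀ u, (1, u * b * u⁻¹) ∈ relSub ρA ρB := by
    intro u
    obtain ⟨a, ha⟩ := hs u
    have := (relSub ρA ρB).mul_mem ((relSub ρA ρB).mul_mem ha hb) ((relSub ρA ρB).inv_mem ha)
    simpa using this
  have hsc : (b : Matrix (Fin n) (Fin n) ℂ) ∈ Set.range (Matrix.scalar (Fin n)) := by
    refine Matrix.mem_range_scalar_of_commute_single fun i j hij => ?_
    set E : Matrix (Fin n) (Fin n) ℂ := Matrix.single i j 1 with hE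
    set B : Matrix (Fin n) (Fin n) ℂ := b.1 with hB
    let u : ℂ → Matrix.SpecialLinearGroup (Fin n) ℂ :=
      fun t => Matrix.SpecialLinearGroup.transvection hij t
    have hu : ∀ t, (u t : Matrix (Fin n) (Fin n) ℂ) = 1 + t • E := fun t => by
      simp [u, hE, Matrix.SpecialLinearGroup.transvection_coe]
    have hEE : E * E = 0 := by simp [hE, Matrix.single_mul_single_of_ne, hij.symm]
    have huinv : ∀ t, (u t)⁻¹ = u (-t) := by
      intro t
      rw [inv_eq_iff_mul_eq_one]
      apply Subtype.ext
      change ((u t * u (-t) : Matrix.SpecialLinearGroup (Fin n) ℂ) : Matrix (Fin n) (Fin n) ℂ) = 1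
      rw [Matrix.SpecialLinearGroup.coe_mul, hu, hu]
      simp [mul_add, add_mul, hEE]
    have hval : ∀ t, ((u t * b * (u t)⁻¹ : Matrix.SpecialLinearGroup (Fin n) ℂ) :
        Matrix (Fin n) (Fin n) ℂ) = (1 + t • E) * B * (1 - t • E) := by
      intro t
      rw [huinv, Matrix.SpecialLinearGroup.coe_mul, Matrix.SpecialLinearGroup.coe_mul, hu, hu,
        neg_smul, ← sub_eq_add_neg]
    have hbound : ∀ t : ℂ, ‖(1 + t • E) * B * (1 - t • E)‖ ≤ C := fun t => by
      rw [← hval]; exact hC _ (hconj _)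
    have hx : ∀ k : ℕ, (k : ℝ) * ‖E * B - B * E‖ ≤ C := by
      intro k
      have h1 := hbound k
      have h2 := hbound (-k)
      have h3 : (1 + (k:ℂ) • E) * B * (1 - (k:ℂ) • E) - (1 + (-(k:ℂ)) • E) * B * (1 - (-(k:ℂ)) • E)
          = ((2:ℂ) * k) • (E * B - B * E) := by
        simp only [neg_smul, mul_add, add_mul, mul_sub, sub_mul, smul_sub, one_mul, mul_one,
          Matrix.smul_mul, Matrix.mul_smul, neg_mul, mul_neg, mul_smul, two_smul]
        abel
      have h4 := norm_sub_le ((1 + (k:ℂ) • E) * B * (1 - (k:ℂ) • E))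
        ((1 + (-(k:ℂ)) • E) * B * (1 - (-(k:ℂ)) • E))
      rw [h3, norm_smul, norm_mul, Complex.norm_natCast, Complex.norm_ofNat] at h4
      linarith
    have h0 : ‖E * B - B * E‖ = 0 := by
      by_contra hne
      have hpos : 0 < ‖E * B - B * E‖ := lt_of_le_of_ne (norm_nonneg _) (Ne.symm hne)
      obtain ⟨k, hk⟩ := exists_nat_gt (C / ‖E * B - B * E‖)
      rw [div_lt_iff₀ hpos] at hk
      linarith [hx k]
    exact sub_eq_zero.1 (norm_eq_zero.1 h0)
  obtain ⟨r, hr⟩ := hsc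
  rw [Subgroup.mem_center_iff]
  intro g
  apply Subtype.ext
  change ((g * b : Matrix.SpecialLinearGroup (Fin n) ℂ) : Matrix (Fin n) (Fin n) ℂ) =
    ((b * g : Matrix.SpecialLinearGroup (Fin n) ℂ) : Matrix (Fin n) (Fin n) ℂ)
  rw [Matrix.SpecialLinearGroup.coe_mul, Matrix.SpecialLinearGroup.coe_mul, ← hr]
  exact ((Matrix.scalar_commute r (fun _ => Commute.all _ _) _).eq).symm

lemma rel_out (hAB : ∀ g : ℕ → G,
      CauchySeq (fun k => ((ρA (g k) : Matrix (Fin m) (Fin m) ℂ))) →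
      ∃ φ : ℕ → ℕ, StrictMono φ ∧
        CauchySeq (fun j => ((ρB (g (φ j)) : Matrix (Fin n) (Fin n) ℂ))))
    (hs : ∀ b, ∃ a, (a, b) ∈ relSub ρA ρB) (g : ℕ → G)
    (hg : Tendsto (fun k => ((ρA (g k) : Matrix (Fin m) (Fin m) ℂ))) atTop (nhds 1)) :
    ∃ φ : ℕ → ℕ, StrictMono φ ∧
            ∃ Z : Matrix (Fin n) (Fin n) ℂ, Z.det = 1 ∧
              (∀ A : Matrix (Fin n) (Fin n) ℂ, A.det = 1 → Z * A = A * Z) ∧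
              Tendsto (fun j => ((ρB (g (φ j)) : Matrix (Fin n) (Fin n) ℂ)))
                atTop (nhds Z) := by
  have h1 : Tendsto (fun k => ρA (g k)) atTop (𝓝 1) := by
    rw [tendsto_SL]; simpa using hg
  obtain ⟨φ, hφ, b, hb, hr⟩ := rel_subseq hAB h1
  refine ⟨φ, hφ, b, b.2, fun A hA => ?_, tendsto_SL.1 hb⟩
  have h2 := Subgroup.mem_center_iff.1 (rel_central hAB hs b hr) ⟨A, hA⟩
  exact (congrArg Subtype.val h2).symm

end analysis

/-- Non-unitary Decoupling lemma for a pair of homomorphisms into `SL(m,ℂ)` and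
`SL(n,ℂ)` with dense images satisfying the cross-Cauchy condition: if `m ≠ n` full
decoupling holds; if `m = n`, either full decoupling holds, or sequences converging
to the identity on one side subconverge to a central element on the other side. -/
theorem stmt14 {G : Type*} [Group G] (m n : ℕ) (hm : 1 ≤ m) (hn : 1 ≤ n)
    (ρA : G →* Matrix.SpecialLinearGroup (Fin m) ℂ)
    (ρB : G →* Matrix.SpecialLinearGroup (Fin n) ℂ)
    (hdA : {M : Matrix (Fin m) (Fin m) ℂ | M.det = 1} ⊆
      closure (Set.range fun g : G => ((ρA g : Matrix (Fin m) (Fin m) ℂ))))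
    (hdB : {M : Matrix (Fin n) (Fin n) ℂ | M.det = 1} ⊆
      closure (Set.range fun g : G => ((ρB g : Matrix (Fin n) (Fin n) ℂ))))
    (hAB : ∀ g : ℕ → G,
      CauchySeq (fun k => ((ρA (g k) : Matrix (Fin m) (Fin m) ℂ))) →
      ∃ φ : ℕ → ℕ, StrictMono φ ∧
        CauchySeq (fun j => ((ρB (g (φ j)) : Matrix (Fin n) (Fin n) ℂ))))
    (hBA : ∀ g : ℕ → G,
      CauchySeq (fun k => ((ρB (g k) : Matrix (Fin n) (Fin n) ℂ))) →
      ∃ φ : ℕ → ℕ, StrictMono φ ∧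
        CauchySeq (fun j => ((ρA (g (φ j)) : Matrix (Fin m) (Fin m) ℂ)))) :
    (m ≠ n →
      ∀ VA : Matrix (Fin m) (Fin m) ℂ, VA.det = 1 →
      ∀ VB : Matrix (Fin n) (Fin n) ℂ, VB.det = 1 →
      ∃ g : ℕ → G,
        Tendsto (fun k => ((ρA (g k) : Matrix (Fin m) (Fin m) ℂ))) atTop (nhds VA) ∧
        Tendsto (fun k => ((ρB (g k) : Matrix (Fin n) (Fin n) ℂ))) atTop (nhds VB)) ∧
    (m = n →
      (∀ VA : Matrix (Fin m) (Fin m) ℂ, VA.det = 1 →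
        ∀ VB : Matrix (Fin n) (Fin n) ℂ, VB.det = 1 →
        ∃ g : ℕ → G,
          Tendsto (fun k => ((ρA (g k) : Matrix (Fin m) (Fin m) ℂ))) atTop (nhds VA) ∧
          Tendsto (fun k => ((ρB (g k) : Matrix (Fin n) (Fin n) ℂ))) atTop (nhds VB)) ∨
      ((∀ g : ℕ → G,
          Tendsto (fun k => ((ρA (g k) : Matrix (Fin m) (Fin m) ℂ))) atTop (nhds 1) →
          ∃ φ : ℕ → ℕ, StrictMono φ ∧
            ∃ Z : Matrix (Fin n) (Fin n) ℂ, Z.det = 1 ∧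
              (∀ A : Matrix (Fin n) (Fin n) ℂ, A.det = 1 → Z * A = A * Z) ∧
              Tendsto (fun j => ((ρB (g (φ j)) : Matrix (Fin n) (Fin n) ℂ)))
                atTop (nhds Z)) ∧
        (∀ g : ℕ → G,
          Tendsto (fun k => ((ρB (g k) : Matrix (Fin n) (Fin n) ℂ))) atTop (nhds 1) →
          ∃ φ : ℕ → ℕ, StrictMono φ ∧
            ∃ Z : Matrix (Fin m) (Fin m) ℂ, Z.det = 1 ∧
              (∀ A : Matrix (Fin m) (Fin m) ℂ, A.det = 1 → Z * A = A * Z) ∧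
              Tendsto (fun j => ((ρA (g (φ j)) : Matrix (Fin m) (Fin m) ℂ)))
                atTop (nhds Z)))) := by
  have sA := rel_surj hdA hAB
  have sB : ∀ b, ∃ a, (a, b) ∈ relSub ρA ρB := fun b => by
    obtain ⟨a, ha⟩ := rel_surj hdB hBA b
    exact ⟨a, relSub_swap.1 ha⟩
  have sA' : ∀ a, ∃ b, (b, a) ∈ relSub ρB ρA := fun a => by
    obtain ⟨b, hb⟩ := sA a
    exact ⟨b, relSub_swap.1 hb⟩
  have cB := rel_central hAB sB
  have cA := rel_central hBA sA'
  refine ⟨fun hne => ?_, fun _ => Or.inr ⟨rel_out hAB sB, rel_out hBA sA'⟩⟩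
  exfalso
  apply hne
  obtain ⟨k, rfl⟩ : ∃ k, n = k + 1 := ⟨n - 1, by omega⟩
  obtain ⟨l, rfl⟩ : ∃ l, m = l + 1 := ⟨m - 1, by omega⟩
  have h1 := aux_alg hm (relSub ρA ρB) sB (fun a ha => cA a (relSub_swap.1 ha)) cB
  have h2 := aux_alg hn (relSub ρB ρA) sA' (fun a ha => cB a (relSub_swap.1 ha)) cA
  omega
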